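/- Let k, l ≥ 2 be multiplicatively independent integers. Let a be a k-automatic sequence produced by a k-automaton 𝒜 and b an l-automatic sequence produced by an l-automaton ℬ, where 𝒜 and ℬ are idempotent, ignore the leading 0's, and have all states accessible. Let C be a strongly connected component of 𝒜 and D a strongly connected component of ℬ. Then there exist states s ∈ C and r ∈ D such that, setting ã(m) = τ(δ*(s, (m)_k)) and b̃(m) = τ′(δ′*(r, (m)_l)), for every integer m ≥ 0 the set Z_m = { n ∈ ℕ : a(n+i) = ã(i) and b(n+i) = b̃(i) for all 0 ≤ i < m } has positive upper density. -/

import Mathlib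

open Filter

/-- The upper density of a set of natural numbers:
`limsup_{n → ∞} |A ∩ [0,n)| / n`. -/
noncomputable def upperDensity (A : Set ℕ) : ℝ :=
  limsup (fun n : ℕ => (Nat.card ↥(A ∩ Set.Iio n) : ℝ) / n) atTop

/-- The base-`k` representation of `n` as a word over `Σ_k = Fin k`, read starting
from the leading digit, with no leading zeros (junk value `[]` if `k ≤ 1`;
the representation of `0` is the empty word). -/
def kRepr (k n : ℕ) : List (Fin k) :=
  if h : 1 < k then
    (Nat.digits k n).reverse.pmap (fun d hd => (⟨d, hd⟩ : Fin k))
      (fun d hd => Nat.digits_lt_base h (List.mem_reverse.mp hd))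
  else []

/-- Run a deterministic automaton with transition function `δ` from the state `s`
on the word `w`, reading `w` from the left: the extended transition function `δ*`. -/
def run {S : Type*} {k : ℕ} (δ : S → Fin k → S) (s : S) (w : List (Fin k)) : S :=
  w.foldl δ s

/-- A sequence `a : ℕ → Ω` is `k`-automatic if it is produced by a deterministic
finite automaton with output, reading the base-`k` representation of the input
starting from the leading digit. -/
def IsAutomatic {Ω : Type*} (k : ℕ) (a : ℕ → Ω) : Prop :=
  ∃ (S : Type) (_ : Fintype S) (δ : S → Fin k → S) (s₀ : S) (τ : S → Ω),
    ∀ n : ℕ, a n = τ (run δ s₀ (kRepr k n))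

/-- Two integers are multiplicatively independent if no nontrivial powers of them
coincide (equivalently, they are not both powers of a common integer). -/
def MultIndep (k l : ℕ) : Prop :=
  ∀ i j : ℕ, k ^ i = l ^ j → i = 0 ∧ j = 0

/-- The finite word `w` occurs in the sequence `a` at position `i`. -/
def OccursAt {Ω : Type*} (a : ℕ → Ω) (w : List Ω) (i : ℕ) : Prop :=
  ∀ (j : ℕ) (h : j < w.length), w.get ⟨j, h⟩ = a (i + j)

/-- The finite word `w` is a factor of the sequence `a`. -/
def IsFactor {Ω : Type*} (a : ℕ → Ω) (w : List Ω) : Prop :=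
  ∃ i : ℕ, OccursAt a w i

/-- A sequence is uniformly recurrent if each of its factors occurs in it with
bounded gaps. -/
def UniformlyRecurrent {Ω : Type*} (a : ℕ → Ω) : Prop :=
  ∀ w : List Ω, IsFactor a w →
    ∃ C : ℕ, ∀ N : ℕ, ∃ i : ℕ, N ≤ i ∧ i ≤ N + C ∧ OccursAt a w i

/-- A strongly connected component of an automaton: a nonempty set of states closed
under all transitions and such that each of its states can be reached from each
other one by some word. -/
def IsSCC {S : Type*} {k : ℕ} (δ : S → Fin k → S) (C : Set S) : Prop :=
  C.Nonempty ∧ (∀ s ∈ C, ∀ u : Fin k, δ s u ∈ C) ∧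
    ∀ s ∈ C, ∀ s' ∈ C, ∃ w : List (Fin k), run δ s w = s'

section Automaton

variable {S : Type*} {k : ℕ}

lemma kRepr_zero : kRepr k 0 = [] := by
  unfold kRepr
  split_ifs <;> simp

lemma kRepr_mul_add (hk : 2 ≤ k) (x : ℕ) (d : Fin k) (h : x ≠ 0 ∨ (d : ℕ) ≠ 0) :
    kRepr k (k * x + d) = kRepr k x ++ [d] := by
  have hk' : 1 < k := hk
  have hdigits : Nat.digits k (k * x + d) = (d : ℕ) :: Nat.digits k x := by
    rw [add_comm]
    exact Nat.digits_add k hk' d x d.isLt h.symm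
  simp only [kRepr, hk', dif_pos, hdigits]
  apply List.map_injective_iff.mpr Fin.val_injective
  simp [List.map_pmap]

/-- If reading `0` fixes `s`, the state reached on `k * x + d` is obtained from that
reached on `x` by reading `d`. -/
lemma run_kRepr_mul_add {δ : S → Fin k → S} {s : S} {z : Fin k} (hk : 2 ≤ k)
    (hz : (z : ℕ) = 0) (hs : δ s z = s) (x : ℕ) (d : Fin k) :
    run δ s (kRepr k (k * x + d)) = δ (run δ s (kRepr k x)) d := by
  by_cases h : x ≠ 0 ∨ (d : ℕ) ≠ 0
  · simp [kRepr_mul_add hk x d h, run]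
  · push Not at h
    obtain ⟨rfl, hd⟩ := h
    obtain rfl : d = z := Fin.ext (hd.trans hz.symm)
    simp [hz, kRepr_zero, run, hs]

lemma pow_succ_mul_add_eq (hk : 2 ≤ k) (j y i : ℕ) :
    k ^ (j + 1) * y + i =
      k * (k ^ j * y + i / k) + (⟨i % k, Nat.mod_lt _ (by lia)⟩ : Fin k) := by
  conv_lhs => rw [← Nat.div_add_mod i k]
  ring

lemma run_kRepr_mem_of_prefix {δ : S → Fin k → S} {s : S} {z : Fin k} (hk : 2 ≤ k)
    (hz : (z : ℕ) = 0) (hs : δ s z = s) {C : Set S} (hC : ∀ t ∈ C, ∀ d, δ t d ∈ C)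
    {y : ℕ} (hy : run δ s (kRepr k y) ∈ C) (j : ℕ) :
    ∀ i < k ^ j, run δ s (kRepr k (k ^ j * y + i)) ∈ C := by
  induction j with
  | zero => simpa using hy
  | succ j ih =>
    intro i hi
    rw [pow_succ_mul_add_eq hk, run_kRepr_mul_add hk hz hs]
    exact hC _ (ih _ (Nat.div_lt_of_lt_mul (by rwa [← pow_succ']))) _

lemma run_kRepr_pow_mul_add {δ : S → Fin k → S} {s : S} {z : Fin k} (hk : 2 ≤ k)
    (hz : (z : ℕ) = 0) (hs : δ s z = s) {y : ℕ}
    (hy : δ (run δ s (kRepr k y)) z = run δ s (kRepr k y)) (j : ℕ) :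
    ∀ i < k ^ j, run δ s (kRepr k (k ^ j * y + i)) =
      run δ (run δ s (kRepr k y)) (kRepr k i) := by
  induction j with
  | zero => simp [kRepr_zero, run]
  | succ j ih =>
    intro i hi
    rw [pow_succ_mul_add_eq hk, run_kRepr_mul_add hk hz hs,
      ih _ (Nat.div_lt_of_lt_mul (by rwa [← pow_succ'])), ← run_kRepr_mul_add hk hz hy,
      Nat.div_add_mod]

/-- After a multiple of a large power of `k`, an idempotent automaton restarts from the
state reached on that multiple. -/
lemma run_kRepr_add_of_dvd {δ : S → Fin k → S} {s : S} {z : Fin k} (hk : 2 ≤ k)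
    (hz : (z : ℕ) = 0) (hs : δ s z = s) (hidem : ∀ t, δ (δ t z) z = δ t z) {m n : ℕ}
    (hn : k ^ (m + 1) ∣ n) {i : ℕ} (hi : i < m) :
    run δ s (kRepr k (n + i)) = run δ (run δ s (kRepr k n)) (kRepr k i) := by
  obtain ⟨x, rfl⟩ := hn
  have hfix : δ (run δ s (kRepr k (k * x))) z = run δ s (kRepr k (k * x)) := by
    have h := run_kRepr_mul_add hk hz hs x z
    rw [hz, add_zero] at h
    rw [h, hidem]
  have hpow : m < k ^ m := Nat.lt_pow_self hk
  have key := run_kRepr_pow_mul_add hk hz hs hfix m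
  have h0 := key 0 (by positivity)
  rw [add_zero, kRepr_zero] at h0
  rw [show k ^ (m + 1) * x = k ^ m * (k * x) by ring, key i (hi.trans hpow), h0]
  rfl

lemma exists_run_kRepr_eq {δ : S → Fin k → S} {s : S} {z : Fin k} (hk : 2 ≤ k)
    (hz : (z : ℕ) = 0) (hs : δ s z = s) (w : List (Fin k)) :
    ∃ n, run δ s (kRepr k n) = run δ s w := by
  induction w using List.reverseRecOn with
  | nil => exact ⟨0, by rw [kRepr_zero]⟩
  | append_singleton w d ih =>
    obtain ⟨n, hn⟩ := ih
    refine ⟨k * n + d, ?_⟩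
    rw [run_kRepr_mul_add hk hz hs, hn]
    simp [run]

/-- Some positive integer has a representation leading into a given component. -/
lemma exists_pos_run_kRepr_mem {δ : S → Fin k → S} {s : S} {z : Fin k} (hk : 2 ≤ k)
    (hz : (z : ℕ) = 0) (hs : δ s z = s) (hacc : ∀ t, ∃ w, run δ s w = t) {C : Set S}
    (hC : IsSCC δ C) : ∃ u, 0 < u ∧ run δ s (kRepr k u) ∈ C := by
  obtain ⟨t, ht⟩ := hC.1
  obtain ⟨w, rfl⟩ := hacc t
  obtain ⟨n, hn⟩ := exists_run_kRepr_eq hk hz hs w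
  refine ⟨k * n + (⟨1, hk⟩ : Fin k), by simp, ?_⟩
  rw [run_kRepr_mul_add hk hz hs, hn]
  exact hC.2.1 _ ht _

end Automaton

section Density

/-- An arithmetic form of having positive upper density. -/
def HasPosUpperDensity (A : Set ℕ) : Prop :=
  ∃ c : ℕ, ∃ᶠ N in atTop, N ≤ c * (A ∩ Set.Iio N).ncard

lemma HasPosUpperDensity.mono {A B : Set ℕ} (h : HasPosUpperDensity A) (hAB : A ⊆ B) :
    HasPosUpperDensity B := by
  obtain ⟨c, hc⟩ := h
  refine ⟨c, hc.mono fun N hN => hN.trans (Nat.mul_le_mul_left _ ?_)⟩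
  exact Set.ncard_le_ncard (Set.inter_subset_inter_left _ hAB)
    ((Set.finite_Iio N).inter_of_right _)

lemma HasPosUpperDensity.upperDensity_pos {A : Set ℕ} (h : HasPosUpperDensity A) :
    0 < upperDensity A := by
  obtain ⟨c, hc⟩ := h
  have hfreq : ∃ᶠ N : ℕ in atTop,
      (1 / (c + 1) : ℝ) ≤ (Nat.card ↥(A ∩ Set.Iio N) : ℝ) / N := by
    refine (hc.and_eventually (eventually_gt_atTop 0)).mono ?_
    rintro N ⟨hN, hpos⟩
    have hN' : (N : ℝ) ≤ c * (Nat.card ↥(A ∩ Set.Iio N) : ℝ) := by exact_mod_cast hN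
    rw [div_le_div_iff₀ (by positivity) (by exact_mod_cast hpos)]
    have : (0 : ℝ) ≤ (Nat.card ↥(A ∩ Set.Iio N) : ℝ) := by positivity
    linarith
  have hbdd : IsBoundedUnder (· ≤ ·) atTop
      (fun N : ℕ => (Nat.card ↥(A ∩ Set.Iio N) : ℝ) / N) := by
    refine isBoundedUnder_of ⟨1, fun N => div_le_one_of_le₀ ?_ (by positivity)⟩
    have := Set.ncard_le_ncard (Set.inter_subset_right (s := A)) (Set.finite_Iio N)
    rw [← Finset.coe_Iio, Set.ncard_coe_finset, Nat.card_Iio] at this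
    exact_mod_cast this
  exact lt_of_lt_of_le (by positivity) (le_limsup_of_frequently_le hfreq hbdd)

lemma HasPosUpperDensity.exists_of_subset_iUnion {ι : Type*} [Finite ι] {A : Set ℕ}
    (h : HasPosUpperDensity A) {B : ι → Set ℕ} (hAB : A ⊆ ⋃ i, B i) :
    ∃ i, HasPosUpperDensity (B i) := by
  have := Fintype.ofFinite ι
  obtain ⟨c, hc⟩ := h
  suffices h : ∃ᶠ N in atTop, ∃ i, N ≤ (c * Fintype.card ι) * (B i ∩ Set.Iio N).ncard by
    obtain ⟨i, hi⟩ := frequently_exists.mp h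
    exact ⟨i, _, hi⟩
  refine (hc.and_eventually (eventually_gt_atTop 0)).mono ?_
  rintro N ⟨hN, hpos⟩
  by_contra! hlt
  have hcard : (A ∩ Set.Iio N).ncard ≤ ∑ i, (B i ∩ Set.Iio N).ncard := by
    calc (A ∩ Set.Iio N).ncard ≤ (⋃ i, B i ∩ Set.Iio N).ncard := by
          apply Set.ncard_le_ncard
          · rw [← Set.iUnion_inter]
            exact Set.inter_subset_inter_left _ hAB
          · exact Set.finite_iUnion fun i => (Set.finite_Iio N).inter_of_right _
      _ ≤ _ := Set.ncard_iUnion_le_of_fintype _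
  have hne : (Finset.univ : Finset ι).Nonempty := by
    rw [Finset.univ_nonempty_iff]
    by_contra hempty
    rw [not_nonempty_iff] at hempty
    simp at hcard
    simp [hcard] at hN
    lia
  have hsum : ∑ i, (c * Fintype.card ι) * (B i ∩ Set.Iio N).ncard < ∑ _i : ι, N :=
    Finset.sum_lt_sum_of_nonempty hne fun i _ => hlt i
  rw [← Finset.mul_sum, Finset.sum_const, Finset.card_univ, smul_eq_mul] at hsum
  have := Nat.mul_le_mul_left (Fintype.card ι) (hN.trans (Nat.mul_le_mul_left c hcard))
  lia

end Density

section LeadingDigits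

lemma MultIndep.irrational_log_div_log {k l : ℕ} (hk : 2 ≤ k) (hl : 2 ≤ l)
    (h : MultIndep k l) : Irrational (Real.log k / Real.log l) := by
  rintro ⟨q, hq⟩
  have hlogk : 0 < Real.log k := Real.log_pos (by exact_mod_cast hk)
  have hlogl : 0 < Real.log l := Real.log_pos (by exact_mod_cast hl)
  have hqpos : 0 < q := by
    have : (0 : ℝ) < q := hq ▸ div_pos hlogk hlogl
    exact_mod_cast this
  have hden : (0 : ℝ) < q.den := by exact_mod_cast q.pos
  have hnum : (q.num.toNat : ℤ) = q.num := Int.toNat_of_nonneg (Rat.num_pos.mpr hqpos).le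
  have hqdef : (q : ℝ) = q.num.toNat / q.den := by
    rw [Rat.cast_def]
    congr 1
    exact_mod_cast hnum.symm
  rw [hqdef, div_eq_div_iff hden.ne' hlogl.ne'] at hq
  have hlog : Real.log ((k : ℝ) ^ q.den) = Real.log ((l : ℝ) ^ q.num.toNat) := by
    rw [Real.log_pow, Real.log_pow]
    linarith
  have hpow : (k : ℝ) ^ q.den = (l : ℝ) ^ q.num.toNat :=
    Real.log_injOn_pos (Set.mem_Ioi.mpr (by positivity)) (Set.mem_Ioi.mpr (by positivity)) hlog
  exact q.den_nz (h _ _ (by exact_mod_cast hpow)).1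

/-- Powers of multiplicatively independent integers have arbitrarily large exponents for
which their ratio lies in a given interval. -/
lemma exists_pow_ratio_mem {k l : ℕ} (hk : 2 ≤ k) (hl : 2 ≤ l) (h : MultIndep k l)
    {x y : ℝ} (hx : 0 < x) (hxy : x < y) (A : ℕ) :
    ∃ α β : ℕ, A ≤ α ∧ x * (l : ℝ) ^ β < (k : ℝ) ^ α ∧ (k : ℝ) ^ α < y * (l : ℝ) ^ β := by
  have hlogk : 0 < Real.log k := Real.log_pos (by exact_mod_cast hk)
  have hlogl : 0 < Real.log l := Real.log_pos (by exact_mod_cast hl)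
  have hfact : Fact (0 < Real.log (l : ℝ)) := ⟨hlogl⟩
  have hy : 0 < y := hx.trans hxy
  obtain ⟨B, hB⟩ := exists_nat_gt (Real.log y / Real.log k)
  rw [div_lt_iff₀ hlogk] at hB
  have hdense : DenseRange (· • (Real.log k : AddCircle (Real.log (l : ℝ))) : ℕ → _) :=
    denseRange_zsmul_iff_nsmul.mp
      (AddCircle.denseRange_zsmul_coe_iff.mpr (h.irrational_log_div_log hk hl))
  set c : ℝ := ((max A B : ℕ) : ℝ) * Real.log k with hc
  have hopen : IsOpen ((QuotientAddGroup.mk : ℝ → AddCircle (Real.log (l : ℝ))) ''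
      Set.Ioo (Real.log x - c) (Real.log y - c)) :=
    QuotientAddGroup.isOpenMap_coe _ isOpen_Ioo
  have hne : (Set.Ioo (Real.log x - c) (Real.log y - c)).Nonempty :=
    Set.nonempty_Ioo.mpr (by linarith [Real.log_lt_log hx hxy])
  obtain ⟨n, t, ⟨ht₁, ht₂⟩, hnt⟩ := hdense.exists_mem_open hopen (hne.image _)
  have hcoe : (((n : ℝ) * Real.log k : ℝ) : AddCircle (Real.log (l : ℝ))) = t := by
    rw [← nsmul_eq_mul]
    exact hnt.symm
  rw [← sub_eq_zero, ← AddCircle.coe_sub, AddCircle.coe_eq_zero_iff] at hcoe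
  obtain ⟨b, hb⟩ := hcoe
  rw [zsmul_eq_mul] at hb
  have hBc : (B : ℝ) * Real.log k ≤ c :=
    mul_le_mul_of_nonneg_right (by exact_mod_cast le_max_right A B) hlogk.le
  have hbpos : 0 ≤ b := by
    by_contra! hneg
    have h₁ : (b : ℝ) * Real.log l < 0 := mul_neg_of_neg_of_pos (by exact_mod_cast hneg) hlogl
    have h₂ : 0 ≤ (n : ℝ) * Real.log k := by positivity
    linarith
  lift b to ℕ using hbpos
  rw [Int.cast_natCast] at hb
  have hα : ((max A B + n : ℕ) : ℝ) * Real.log k = c + n * Real.log k := by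
    push_cast [hc]
    ring
  refine ⟨max A B + n, b, by lia, ?_, ?_⟩
  · rw [← Real.log_lt_log_iff (by positivity) (by positivity),
      Real.log_mul (by positivity) (by positivity), Real.log_pow, Real.log_pow, hα]
    linarith
  · rw [← Real.log_lt_log_iff (by positivity) (by positivity),
      Real.log_mul (by positivity) (by positivity), Real.log_pow, Real.log_pow, hα]
    linarith

/-- An interval of length at least `J * M` contains at least `J` multiples of `M`. -/
lemma le_ncard_of_dvd_mem_Ioc {A : Set ℕ} (hA : A.Finite) {M X J : ℕ} (hM : 0 < M)
    (hmem : ∀ n, M ∣ n → X < n → n ≤ X + J * M → n ∈ A) : J ≤ A.ncard := by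
  have hinj : Function.Injective fun j => M * (X / M + 1 + j) := by
    intro i j hij
    have := Nat.eq_of_mul_eq_mul_left hM hij
    lia
  have hlow := Nat.lt_div_mul_add hM (a := X)
  have hupp := Nat.div_mul_le_self X M
  calc J = ((fun j => M * (X / M + 1 + j)) '' (Finset.range J : Set ℕ)).ncard := by
        rw [Set.ncard_image_of_injective _ hinj, Set.ncard_coe_finset, Finset.card_range]
    _ ≤ A.ncard := by
        refine Set.ncard_le_ncard ?_ hA
        rintro _ ⟨j, hj, rfl⟩
        have hjM : (j + 1) * M ≤ J * M := Nat.mul_le_mul_right _ (by simpa using hj)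
        refine hmem _ ⟨_, rfl⟩ ?_ ?_
        · calc X < X / M * M + M := hlow
            _ ≤ X / M * M + M + M * j := Nat.le_add_right _ _
            _ = M * (X / M + 1 + j) := by ring
        · calc M * (X / M + 1 + j) = X / M * M + (j + 1) * M := by ring
            _ ≤ X + J * M := Nat.add_le_add hupp hjM

/-- If `K * u < L * (v + 1 / 2)`, then points slightly to the right of `K * u` still
precede `L * (v + 1)`. -/
lemma add_lt_of_mul_lt {K L u v t : ℕ} (hu : 0 < u)
    (hupp : K * (2 * u) < (2 * v + 1) * L) (ht : (2 * v + 1) * t < K) :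
    K * u + t < L * v + L := by
  have hK : K ≤ K * u := Nat.le_mul_of_pos_right _ hu
  have htL : 2 * t < L := by
    refine Nat.lt_of_mul_lt_mul_left (a := 2 * v + 1) ?_
    calc (2 * v + 1) * (2 * t) = 2 * ((2 * v + 1) * t) := by ring
      _ < 2 * K := by lia
      _ ≤ K * (2 * u) := by lia
      _ < _ := hupp
  lia

/-- Among the multiples of `M`, those whose expansions in two multiplicatively independent
bases have prescribed leading parts have positive upper density. -/
lemma hasPosUpperDensity_prefixes {k l : ℕ} (hk : 2 ≤ k) (hl : 2 ≤ l) (h : MultIndep k l)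
    {u v M : ℕ} (hu : 0 < u) (hv : 0 < v) (hM : 0 < M) :
    HasPosUpperDensity {n | M ∣ n ∧ (∃ α, ∃ i < k ^ α, n = k ^ α * u + i) ∧
      ∃ β, ∃ i < l ^ β, n = l ^ β * v + i} := by
  have hu' : (0 : ℝ) < u := by exact_mod_cast hu
  have hv' : (0 : ℝ) < v := by exact_mod_cast hv
  obtain ⟨E, hE⟩ : ∃ E, E = (2 * v + 1) * M := ⟨_, rfl⟩
  have hEpos : 0 < E := by rw [hE]; positivity
  refine ⟨2 * E * (u + 1), frequently_atTop.mpr fun N₀ => ?_⟩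
  obtain ⟨α, β, hα, hlow, hupp⟩ := exists_pow_ratio_mem hk hl h (x := v / u)
    (y := (2 * v + 1) / (2 * u)) (by positivity)
    (by rw [div_lt_div_iff₀ hu' (by positivity)]; linarith) (max N₀ E)
  rw [div_mul_eq_mul_div, div_lt_iff₀ hu'] at hlow
  rw [div_mul_eq_mul_div, lt_div_iff₀ (by positivity)] at hupp
  have hαlt : α < k ^ α := Nat.lt_pow_self hk
  have hlow' : v * l ^ β < k ^ α * u := by exact_mod_cast hlow
  have hupp' : k ^ α * (2 * u) < (2 * v + 1) * l ^ β := by exact_mod_cast hupp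
  have hEK : E < k ^ α := by lia
  have hNK : N₀ ≤ k ^ α := by lia
  obtain ⟨J, hJ⟩ : ∃ J, J = (k ^ α - 1) / E := ⟨_, rfl⟩
  have hJ_lt : J * E < k ^ α := by
    have := Nat.div_mul_le_self (k ^ α - 1) E
    rw [← hJ] at this
    lia
  have hJ_pos : 0 < J := hJ ▸ Nat.div_pos (by lia) hEpos
  have hJ_gt : k ^ α ≤ J * E + E := by
    have := Nat.lt_div_mul_add hEpos (a := k ^ α - 1)
    rw [← hJ] at this
    lia
  refine ⟨(u + 1) * k ^ α, hNK.trans (Nat.le_mul_of_pos_left _ u.succ_pos), ?_⟩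
  have hstep : (2 * v + 1) * (J * M) < k ^ α := by
    rwa [show (2 * v + 1) * (J * M) = J * E by rw [hE]; ring]
  have hJM : J * M < k ^ α := (Nat.le_mul_of_pos_left _ (by lia)).trans_lt hstep
  have hnL := add_lt_of_mul_lt hu hupp' hstep
  have hcard := le_ncard_of_dvd_mem_Ioc (A := {n | M ∣ n ∧
      (∃ α, ∃ i < k ^ α, n = k ^ α * u + i) ∧ ∃ β, ∃ i < l ^ β, n = l ^ β * v + i} ∩
        Set.Iio ((u + 1) * k ^ α)) ((Set.finite_Iio _).inter_of_right _) hM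
    (X := k ^ α * u) (J := J) fun n hdvd hn₁ hn₂ =>
      ⟨⟨hdvd, ⟨α, n - k ^ α * u, by lia, by lia⟩, β, n - l ^ β * v, by lia, by lia⟩,
        by rw [Set.mem_Iio, add_mul, mul_comm u]; lia⟩
  have hK : k ^ α ≤ 2 * E * J := by
    have : E ≤ J * E := Nat.le_mul_of_pos_left _ hJ_pos
    linarith
  calc (u + 1) * k ^ α ≤ (u + 1) * (2 * E * J) := Nat.mul_le_mul_left _ hK
    _ = 2 * E * (u + 1) * J := by ring
    _ ≤ _ := Nat.mul_le_mul_left _ hcard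

end LeadingDigits

/-- Given idempotent automata `𝒜`, `ℬ` over multiplicatively independent bases `k`, `l`
which ignore leading `0`'s and have all states accessible, producing sequences `a`
and `b`, and strongly connected components `C` of `𝒜` and `D` of `ℬ`, there are
states `s ∈ C` and `r ∈ D` such that for every `m` the set `Z_m` of positions where
`a` and `b` simultaneously start a copy of the length-`m` prefixes of
`ã = a_{𝒜,s}` and `b̃ = a_{ℬ,r}` has positive upper density. -/
theorem exists_states_positive_density {S S' Ω Ω' : Type}
    [Fintype S] [Fintype S'] [Fintype Ω] [Fintype Ω']
    (k l : ℕ) (hk : 2 ≤ k) (hl : 2 ≤ l) (hind : MultIndep k l)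
    (δ : S → Fin k → S) (s₀ : S) (τ : S → Ω)
    (δ' : S' → Fin l → S') (s₀' : S') (τ' : S' → Ω')
    (z₀ : Fin k) (hz₀ : (z₀ : ℕ) = 0) (z₀' : Fin l) (hz₀' : (z₀' : ℕ) = 0)
    (hzero : δ s₀ z₀ = s₀) (hzero' : δ' s₀' z₀' = s₀')
    (hidem : ∀ s : S, δ (δ s z₀) z₀ = δ s z₀)
    (hidem' : ∀ s : S', δ' (δ' s z₀') z₀' = δ' s z₀')
    (hacc : ∀ s : S, ∃ w : List (Fin k), run δ s₀ w = s)
    (hacc' : ∀ s : S', ∃ w : List (Fin l), run δ' s₀' w = s)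
    (a : ℕ → Ω) (b : ℕ → Ω')
    (ha : ∀ n : ℕ, a n = τ (run δ s₀ (kRepr k n)))
    (hb : ∀ n : ℕ, b n = τ' (run δ' s₀' (kRepr l n)))
    (C : Set S) (hC : IsSCC δ C) (D : Set S') (hD : IsSCC δ' D) :
    ∃ s ∈ C, ∃ r ∈ D, ∀ m : ℕ,
      0 < upperDensity {n : ℕ | ∀ i < m,
        a (n + i) = τ (run δ s (kRepr k i)) ∧
        b (n + i) = τ' (run δ' r (kRepr l i))} := by
  obtain ⟨u, hu, huC⟩ := exists_pos_run_kRepr_mem hk hz₀ hzero hacc hC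
  obtain ⟨v, hv, hvD⟩ := exists_pos_run_kRepr_mem hl hz₀' hzero' hacc' hD
  let Z (m : ℕ) (p : C × D) : Set ℕ := {n | ∀ i < m,
    a (n + i) = τ (run δ p.1 (kRepr k i)) ∧ b (n + i) = τ' (run δ' p.2 (kRepr l i))}
  have hZ_pos (m : ℕ) : ∃ p, HasPosUpperDensity (Z m p) := by
    refine (hasPosUpperDensity_prefixes hk hl hind hu hv
      (M := k ^ (m + 1) * l ^ (m + 1)) (by positivity)).exists_of_subset_iUnion ?_
    rintro n ⟨hdvd, ⟨α, i, hi, hni⟩, β, j, hj, hnj⟩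
    have hnC : run δ s₀ (kRepr k n) ∈ C :=
      hni ▸ run_kRepr_mem_of_prefix hk hz₀ hzero hC.2.1 huC α i hi
    have hnD : run δ' s₀' (kRepr l n) ∈ D :=
      hnj ▸ run_kRepr_mem_of_prefix hl hz₀' hzero' hD.2.1 hvD β j hj
    refine Set.mem_iUnion.mpr ⟨(⟨_, hnC⟩, ⟨_, hnD⟩), fun i hi => ⟨?_, ?_⟩⟩
    · rw [ha, run_kRepr_add_of_dvd hk hz₀ hzero hidem (dvd_of_mul_right_dvd hdvd) hi]
    · rw [hb, run_kRepr_add_of_dvd hl hz₀' hzero' hidem' (dvd_of_mul_left_dvd hdvd) hi]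
  obtain ⟨p, hp⟩ := frequently_exists.mp (Frequently.of_forall hZ_pos : ∃ᶠ m in atTop, _)
  refine ⟨p.1, p.1.2, p.2, p.2.2, fun m => ?_⟩
  obtain ⟨m', hm', hpos⟩ := frequently_atTop.mp hp m
  have hsub : Z m' p ⊆ Z m p := fun n hn i hi => hn i (hi.trans_le hm')
  exact (hpos.mono hsub).upperDensity_pos
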